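/- Let Γ be a Shilla distance-regular graph with b = b(Γ) ≥ 2 and m₂ = m₃. If b₂ = c₂, then a₃ = b(b-1)/2 (and c₂ = b(b-1)/4). -/

import Mathlib

open Finset SimpleGraph

/-- `G` is a distance-regular graph with diameter `D` and intersection numbers
`b i`, `c i`, `a i` (so valency `k = b 0` and `a i = k - b i - c i`). -/
structure IsDRG {V : Type*} [Fintype V] (G : SimpleGraph V) (D : ℕ)
    (b c a : ℕ → ℕ) : Prop where
  connected : G.Connected
  le_diam : ∀ x y : V, G.dist x y ≤ D
  exists_diam : ∃ x y : V, G.dist x y = D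
  card_b : ∀ i, i ≤ D → ∀ x y : V, G.dist x y = i →
      Nat.card {z : V | G.Adj y z ∧ G.dist x z = i + 1} = b i
  card_c : ∀ i, i ≤ D → ∀ x y : V, G.dist x y = i →
      Nat.card {z : V | G.Adj y z ∧ G.dist x z = i - 1} = c i
  card_a : ∀ i, i ≤ D → ∀ x y : V, G.dist x y = i →
      Nat.card {z : V | G.Adj y z ∧ G.dist x z = i} = a i

/-- `θ` is an eigenvalue of the adjacency matrix of `G`. -/
def IsEig {V : Type*} [Fintype V] [DecidableEq V] (G : SimpleGraph V)
    [DecidableRel G.Adj] (θ : ℝ) : Prop :=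
  ∃ v : V → ℝ, v ≠ 0 ∧ (G.adjMatrix ℝ).mulVec v = θ • v

/-- `θ` is the second largest eigenvalue of `G` (`k` being the largest). -/
def IsSecondLargestEig {V : Type*} [Fintype V] [DecidableEq V] (G : SimpleGraph V)
    [DecidableRel G.Adj] (k θ : ℝ) : Prop :=
  IsEig G θ ∧ θ < k ∧ ∀ η : ℝ, IsEig G η → η ≠ k → η ≤ θ

/-- `θ` is the smallest eigenvalue of `G`. -/
def IsSmallestEig {V : Type*} [Fintype V] [DecidableEq V] (G : SimpleGraph V)
    [DecidableRel G.Adj] (θ : ℝ) : Prop :=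
  IsEig G θ ∧ ∀ η : ℝ, IsEig G η → θ ≤ η

/-- The multiplicity of `θ` as an eigenvalue of the adjacency matrix of `G`. -/
noncomputable def eigMult {V : Type*} [Fintype V] [DecidableEq V] (G : SimpleGraph V)
    [DecidableRel G.Adj] (θ : ℝ) : ℕ :=
  Module.finrank ℝ ↥(Module.End.eigenspace (Matrix.toLin' (G.adjMatrix ℝ)) θ)

/-- A Shilla distance-regular graph: diameter `3` and second largest eigenvalue `a 3`. -/
structure IsShilla {V : Type*} [Fintype V] [DecidableEq V] (G : SimpleGraph V)
    [DecidableRel G.Adj] (b c a : ℕ → ℕ) : Prop where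
  drg : IsDRG G 3 b c a
  second : IsSecondLargestEig G (b 0) ((a 3 : ℝ))

/-!
Summing an eigenvector over the spheres around a vertex turns the eigenvalue equation into a
three-term recurrence whose coefficients are the intersection numbers. In diameter `3`, when `a₃`
is itself an eigenvalue, this shows that `k = a₃ b` and that the two remaining eigenvalues are the
roots of a quadratic with coefficients in `a₃`, `b`, `b₂`, `c₂`. As the multiplicity of `k` is `1`,
the traces of `A⁰`, `A¹` and `A²` give three linear equations for `m₁` and `m₂ = m₃`; eliminating
these unknowns yields a relation between `a₃`, `b`, `b₂` and `c₂`. For `b₂ = c₂` its left-hand side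
has the sign of `2c₂ - a₃`, so `a₃ = 2c₂`, and the relation collapses to `4c₂ = b(b - 1)`.
-/

section HermitianMatrix

variable {𝕜 n : Type*} [RCLike 𝕜] [Fintype n] [DecidableEq n] {A : Matrix n n 𝕜}

theorem trace_pow_eq_sum_eigenvalues_pow (hA : A.IsHermitian) (m : ℕ) :
    (A ^ m).trace = ∑ i, (hA.eigenvalues i : 𝕜) ^ m := by
  conv_lhs => rw [hA.spectral_theorem, ← map_pow, Unitary.conjStarAlgAut_apply,
    Matrix.trace_mul_cycle, Unitary.coe_star_mul_self, one_mul, Matrix.diagonal_pow,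
    Matrix.trace_diagonal]
  rfl

theorem finrank_eigenspace_toEuclideanLin (A : Matrix n n 𝕜) (μ : 𝕜) :
    Module.finrank 𝕜 (Module.End.eigenspace (Matrix.toEuclideanLin A) μ) =
      Module.finrank 𝕜 (Module.End.eigenspace (Matrix.toLin' A) μ) := by
  have hmap : Module.End.eigenspace (Matrix.toLin' A) μ =
      (Module.End.eigenspace (Matrix.toEuclideanLin A) μ).map
        (WithLp.linearEquiv 2 𝕜 (n → 𝕜)).toLinearMap := by
    ext v
    simp only [Submodule.mem_map_equiv, Module.End.mem_eigenspace_iff]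
    rw [← (WithLp.linearEquiv 2 𝕜 (n → 𝕜)).injective.eq_iff]
    simp [Matrix.toLpLin_apply]
  rw [hmap, LinearEquiv.finrank_map_eq]

theorem card_filter_eigenvalues_eq_finrank_eigenspace (hA : A.IsHermitian) (μ : ℝ) :
    #{i | hA.eigenvalues i = μ} =
      Module.finrank 𝕜 (Module.End.eigenspace (Matrix.toLin' A) (μ : 𝕜)) := by
  have hT := Matrix.isSymmetric_toEuclideanLin_iff.mpr hA
  calc #{i | hA.eigenvalues i = μ}
      = #{j | (hT.eigenvalues finrank_euclideanSpace j : 𝕜) = μ} :=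
        Finset.card_equiv (Fintype.equivOfCardEq (Fintype.card_fin _)).symm fun i => by
          rw [Finset.mem_filter_univ, Finset.mem_filter_univ, RCLike.ofReal_inj]; rfl
    _ = Module.finrank 𝕜 (Module.End.eigenspace (Matrix.toEuclideanLin A) (μ : 𝕜)) :=
        hT.card_filter_eigenvalues_eq finrank_euclideanSpace μ
    _ = _ := finrank_eigenspace_toEuclideanLin A μ

end HermitianMatrix

section AdjacencySpectrum

variable {V : Type*} [Fintype V] [DecidableEq V] {G : SimpleGraph V} [DecidableRel G.Adj]

theorem isEig_eigenvalues (i : V) : IsEig G ((isHermitian_adjMatrix ℝ G).eigenvalues i) :=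
  ⟨_, (WithLp.ofLp_eq_zero 2).ne.2 <|
    (isHermitian_adjMatrix ℝ G).eigenvectorBasis.orthonormal.ne_zero i,
    (isHermitian_adjMatrix ℝ G).mulVec_eigenvectorBasis i⟩

theorem sum_eigMult_mul_pow {s : Finset ℝ} (hs : ∀ θ, IsEig G θ → θ ∈ s) (m : ℕ) :
    ∑ θ ∈ s, eigMult G θ * θ ^ m = (G.adjMatrix ℝ ^ m).trace := by
  have hA := isHermitian_adjMatrix ℝ G
  rw [trace_pow_eq_sum_eigenvalues_pow hA]
  simp only [RCLike.ofReal_real_eq_id, id]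
  rw [← Finset.sum_fiberwise_of_maps_to' (t := s) (fun i _ => hs _ (isEig_eigenvalues i))
    fun θ => θ ^ m]
  refine Finset.sum_congr rfl fun θ _ => ?_
  rw [Finset.sum_const, nsmul_eq_mul, card_filter_eigenvalues_eq_finrank_eigenspace hA]
  rfl

theorem eigMult_degree_eq_card_connectedComponent {d : ℕ} (hd : G.IsRegularOfDegree d) :
    eigMult G d = Nat.card G.ConnectedComponent := by
  classical
  suffices hker : Module.End.eigenspace (Matrix.toLin' (G.adjMatrix ℝ)) d =
      LinearMap.ker (Matrix.toLin' (G.lapMatrix ℝ)) by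
    rw [Nat.card_eq_fintype_card, card_connectedComponent_eq_finrank_ker_toLin'_lapMatrix, eigMult,
      hker]
  ext v
  rw [Module.End.mem_eigenspace_iff, LinearMap.mem_ker, Matrix.toLin'_apply, Matrix.toLin'_apply,
    lapMatrix, Matrix.sub_mulVec, sub_eq_zero, eq_comm]
  suffices (G.degMatrix ℝ).mulVec v = (d : ℝ) • v by rw [this]
  ext x
  simp [degMatrix_mulVec_apply, hd.degree_eq x]

end AdjacencySpectrum

/-- The finset of vertices at distance `i` from `x`, over which eigenvectors are summed. The
distance of `SimpleGraph` is `0` between different components, so the notion is only meaningful in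
a connected graph. -/
noncomputable def distSphere {V : Type*} [Fintype V] (G : SimpleGraph V) (x : V) (i : ℕ) :
    Finset V :=
  {z | G.dist x z = i}

/-- The sum of `v` over the sphere of radius `i` around `x`. Up to the factor `v x`, for an
eigenvector `v` these sums depend only on the eigenvalue and the intersection numbers. -/
noncomputable def sphereSum {V : Type*} [Fintype V] (G : SimpleGraph V) (x : V) (v : V → ℝ)
    (i : ℕ) : ℝ :=
  ∑ z ∈ distSphere G x i, v z

section Distance

variable {V : Type*} {G : SimpleGraph V}

theorem exists_adj_dist_eq_of_dist_eq_succ (hG : G.Connected) {x y : V} {n : ℕ}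
    (h : G.dist x y = n + 1) : ∃ z, G.Adj y z ∧ G.dist x z = n := by
  rw [dist_comm] at h
  obtain ⟨p, hp⟩ := hG.exists_walk_length_eq_dist y x
  cases p with
  | nil => simp at h
  | @cons _ z _ hyz q =>
    refine ⟨z, hyz, ?_⟩
    have htri := hG.dist_triangle (u := y) (v := z) (w := x)
    have hone := dist_eq_one_iff_adj.mpr hyz
    have hle := dist_le q
    rw [Walk.length_cons] at hp
    rw [dist_comm]
    lia

variable [Fintype V]

theorem mem_distSphere {x z : V} {i : ℕ} : z ∈ distSphere G x i ↔ G.dist x z = i :=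
  Finset.mem_filter_univ z

theorem natCard_setOf_adj_and_dist_eq [DecidableRel G.Adj] (x y : V) (j : ℕ) :
    Nat.card {z : V | G.Adj y z ∧ G.dist x z = j} =
      #{z ∈ G.neighborFinset y | G.dist x z = j} := by
  rw [Nat.card_coe_set_eq, ← Set.ncard_coe_finset]
  congr 1
  ext z
  simp

theorem card_filter_neighborFinset_dist_eq_zero [DecidableRel G.Adj] {x y : V} {j : ℕ}
    (hj : ¬(G.dist x y = j ∨ G.dist x y = j + 1 ∨ j = G.dist x y + 1)) :
    #{z ∈ G.neighborFinset y | G.dist x z = j} = 0 := by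
  refine Finset.card_eq_zero.mpr (Finset.filter_eq_empty_iff.mpr fun z hz hxz => hj ?_)
  have := ((G.mem_neighborFinset _ _).mp hz).diff_dist_adj (u := x)
  lia

theorem sphereSum_zero (hG : G.Connected) (x : V) (v : V → ℝ) : sphereSum G x v 0 = v x := by
  have hsphere : distSphere G x 0 = {x} := by
    ext z
    rw [mem_distSphere, hG.dist_eq_zero_iff, Finset.mem_singleton, eq_comm]
  rw [sphereSum, hsphere, Finset.sum_singleton]

theorem sphereSum_one [DecidableRel G.Adj] {θ : ℝ} {v : V → ℝ}
    (hv : (G.adjMatrix ℝ).mulVec v = θ • v) (x : V) : sphereSum G x v 1 = θ * v x := by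
  have hsphere : distSphere G x 1 = G.neighborFinset x := by
    ext z
    rw [mem_distSphere, dist_eq_one_iff_adj, mem_neighborFinset]
  rw [sphereSum, hsphere, ← adjMatrix_mulVec_apply, hv, Pi.smul_apply, smul_eq_mul]

end Distance

namespace IsDRG

variable {V : Type*} [Fintype V] {G : SimpleGraph V} {D : ℕ} {b c a : ℕ → ℕ}

theorem exists_dist_eq (h : IsDRG G D b c a) {i : ℕ} (hi : i ≤ D) : ∃ x y, G.dist x y = i := by
  induction hi using Nat.decreasingInduction with
  | self => exact h.exists_diam
  | of_succ i _ ih =>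
    obtain ⟨x, y, hxy⟩ := ih
    obtain ⟨z, -, hz⟩ := exists_adj_dist_eq_of_dist_eq_succ h.connected hxy
    exact ⟨x, z, hz⟩

theorem b_pos (h : IsDRG G D b c a) {i : ℕ} (hi : i < D) : 0 < b i := by
  obtain ⟨x, y, hxy⟩ := h.exists_dist_eq (i := i + 1) hi
  obtain ⟨z, hyz, hz⟩ := exists_adj_dist_eq_of_dist_eq_succ h.connected hxy
  rw [← h.card_b i hi.le x z hz, Nat.card_pos_iff]
  exact ⟨⟨y, hyz.symm, hxy⟩, inferInstance⟩

theorem c_succ_pos (h : IsDRG G D b c a) {i : ℕ} (hi : i < D) : 0 < c (i + 1) := by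
  obtain ⟨x, y, hxy⟩ := h.exists_dist_eq (i := i + 1) hi
  obtain ⟨z, hyz, hz⟩ := exists_adj_dist_eq_of_dist_eq_succ h.connected hxy
  rw [← h.card_c (i + 1) hi x y hxy, Nat.card_pos_iff]
  exact ⟨⟨z, hyz, hz⟩, inferInstance⟩

theorem c_one (h : IsDRG G D b c a) (hD : 0 < D) : c 1 = 1 := by
  obtain ⟨x, y, hxy⟩ := h.exists_dist_eq (i := 1) hD
  rw [← h.card_c 1 hD x y hxy, Nat.card_coe_set_eq, Set.ncard_eq_one]
  refine ⟨x, Set.eq_singleton_iff_unique_mem.mpr ⟨⟨?_, dist_self⟩, ?_⟩⟩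
  · exact (dist_eq_one_iff_adj.mp hxy).symm
  · exact fun z hz => (h.connected.dist_eq_zero_iff.mp hz.2).symm

theorem b_diam (h : IsDRG G D b c a) : b D = 0 := by
  obtain ⟨x, y, hxy⟩ := h.exists_diam
  rw [← h.card_b D le_rfl x y hxy, Nat.card_coe_set_eq, Set.ncard_eq_zero,
    Set.eq_empty_iff_forall_notMem]
  rintro z ⟨-, hz⟩
  exact absurd (h.le_diam x z) (by lia)

theorem card_filter_dist_eq_succ [DecidableRel G.Adj] (h : IsDRG G D b c a) {x y : V} {i : ℕ}
    (hxy : G.dist x y = i) : #{z ∈ G.neighborFinset y | G.dist x z = i + 1} = b i := by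
  rw [← natCard_setOf_adj_and_dist_eq, h.card_b i (hxy ▸ h.le_diam x y) x y hxy]

theorem card_filter_dist_eq_self [DecidableRel G.Adj] (h : IsDRG G D b c a) {x y : V} {i : ℕ}
    (hxy : G.dist x y = i) : #{z ∈ G.neighborFinset y | G.dist x z = i} = a i := by
  rw [← natCard_setOf_adj_and_dist_eq, h.card_a i (hxy ▸ h.le_diam x y) x y hxy]

theorem card_filter_succ_dist_eq [DecidableRel G.Adj] (h : IsDRG G D b c a) {x y : V} {i : ℕ}
    (hxy : G.dist x y = i + 1) : #{z ∈ G.neighborFinset y | G.dist x z = i} = c (i + 1) := by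
  rw [← natCard_setOf_adj_and_dist_eq, ← h.card_c (i + 1) (hxy ▸ h.le_diam x y) x y hxy,
    Nat.add_sub_cancel]

theorem isRegularOfDegree [DecidableRel G.Adj] (h : IsDRG G D b c a) :
    G.IsRegularOfDegree (b 0) := by
  intro x
  rw [← h.card_filter_dist_eq_succ (dist_self (v := x)), Finset.filter_true_of_mem,
    card_neighborFinset_eq_degree]
  exact fun z hz => dist_eq_one_iff_adj.mpr ((G.mem_neighborFinset _ _).mp hz)

theorem c_add_a_add_b (h : IsDRG G D b c a) {i : ℕ} (hi : i < D) :
    c (i + 1) + a (i + 1) + b (i + 1) = b 0 := by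
  classical
  obtain ⟨x, y, hxy⟩ := h.exists_dist_eq (i := i + 1) hi
  rw [← h.isRegularOfDegree y, ← card_neighborFinset_eq_degree, Finset.card_eq_sum_ones,
    ← h.card_filter_succ_dist_eq hxy, ← h.card_filter_dist_eq_self hxy,
    ← h.card_filter_dist_eq_succ hxy]
  simp only [Finset.card_filter, ← Finset.sum_add_distrib]
  refine Finset.sum_congr rfl fun z hz => ?_
  have := ((G.mem_neighborFinset _ _).mp hz).diff_dist_adj (u := x)
  grind

theorem card_distSphere_mul_b (h : IsDRG G D b c a) (x : V) (i : ℕ) :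
    #(distSphere G x i) * b i = #(distSphere G x (i + 1)) * c (i + 1) := by
  classical
  refine Finset.card_mul_eq_card_mul G.Adj (fun y hy => ?_) fun z hz => ?_
  · rw [← h.card_filter_dist_eq_succ (mem_distSphere.mp hy)]
    congr 1
    ext z
    simp [Finset.mem_bipartiteAbove, mem_distSphere, and_comm]
  · rw [← h.card_filter_succ_dist_eq (mem_distSphere.mp hz)]
    congr 1
    ext y
    simp [Finset.mem_bipartiteBelow, mem_distSphere, adj_comm, and_comm]

theorem sum_card_distSphere (h : IsDRG G D b c a) (x : V) :
    ∑ i ∈ range (D + 1), #(distSphere G x i) = Fintype.card V :=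
  (Finset.card_eq_sum_card_fiberwise
    fun z _ => Finset.mem_coe.mpr (Finset.mem_range_succ_iff.mpr (h.le_diam x z))).symm

theorem card_filter_dist_neighborFinset [DecidableRel G.Adj] (h : IsDRG G D b c a) (x z : V)
    (i : ℕ) :
    #{y ∈ G.neighborFinset z | G.dist x y = i + 1} =
      (if G.dist x z = i then b i else 0) + (if G.dist x z = i + 1 then a (i + 1) else 0) +
        if G.dist x z = i + 2 then c (i + 2) else 0 := by
  by_cases hb : G.dist x z = i
  · simp [h.card_filter_dist_eq_succ hb, hb]
  by_cases ha : G.dist x z = i + 1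
  · simp [h.card_filter_dist_eq_self ha, ha]
  by_cases hc : G.dist x z = i + 2
  · simp [h.card_filter_succ_dist_eq hc, hc]
  · rw [card_filter_neighborFinset_dist_eq_zero (by lia)]
    simp [hb, ha, hc]

theorem sphereSum_eq_zero_of_diam_lt (h : IsDRG G D b c a) (x : V) (v : V → ℝ) {i : ℕ}
    (hi : D < i) : sphereSum G x v i = 0 := by
  refine Finset.sum_eq_zero fun z hz => absurd (h.le_diam x z) ?_
  rw [mem_distSphere.mp hz]
  exact hi.not_ge

theorem sphereSum_recurrence [DecidableRel G.Adj] (h : IsDRG G D b c a) {θ : ℝ} {v : V → ℝ}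
    (hv : (G.adjMatrix ℝ).mulVec v = θ • v) (x : V) (i : ℕ) :
    b i * sphereSum G x v i + a (i + 1) * sphereSum G x v (i + 1) +
      c (i + 2) * sphereSum G x v (i + 2) = θ * sphereSum G x v (i + 1) := by
  have heig (y : V) : θ * v y = ∑ z ∈ G.neighborFinset y, v z := by
    rw [← adjMatrix_mulVec_apply, hv, Pi.smul_apply, smul_eq_mul]
  symm
  calc θ * sphereSum G x v (i + 1)
      = ∑ y ∈ distSphere G x (i + 1), ∑ z ∈ G.neighborFinset y, v z := by
        simp only [sphereSum, Finset.mul_sum, heig]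
    _ = ∑ z, ∑ y ∈ G.neighborFinset z with G.dist x y = i + 1, v z :=
        Finset.sum_comm' fun y z => by simp [mem_distSphere, adj_comm, and_comm]
    _ = ∑ z, #{y ∈ G.neighborFinset z | G.dist x y = i + 1} * v z := by
        simp only [Finset.sum_const, nsmul_eq_mul]
    _ = _ := by
        simp only [h.card_filter_dist_neighborFinset, Nat.cast_add, Nat.cast_ite, Nat.cast_zero,
          add_mul, ite_mul, zero_mul, Finset.sum_add_distrib, ← Finset.sum_filter, sphereSum,
          distSphere, Finset.mul_sum]

theorem eigMult_valency [DecidableEq V] [DecidableRel G.Adj] (h : IsDRG G D b c a) :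
    eigMult G (b 0) = 1 := by
  rw [eigMult_degree_eq_card_connectedComponent h.isRegularOfDegree, Nat.card_eq_one_iff_unique]
  have := h.connected.nonempty
  exact ⟨h.connected.preconnected.subsingleton_connectedComponent, inferInstance⟩

theorem trace_adjMatrix_sq [DecidableRel G.Adj] [DecidableEq V] (h : IsDRG G D b c a) :
    (G.adjMatrix ℝ ^ 2).trace = Fintype.card V * b 0 := by
  simp only [sq, Matrix.trace, Matrix.diag_apply, adjMatrix_mul_self_apply_self,
    h.isRegularOfDegree.degree_eq, Finset.sum_const, Finset.card_univ, nsmul_eq_mul]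

/- The left-hand side is the characteristic polynomial of the tridiagonal intersection matrix. -/
theorem intersection_charpoly_eq_zero [DecidableEq V] [DecidableRel G.Adj] (h : IsDRG G 3 b c a)
    {θ : ℝ} (hθ : IsEig G θ) :
    (θ - a 3) * ((θ - a 2) * ((θ - a 1) * θ - b 0) - b 1 * c 2 * θ) -
      b 2 * c 3 * ((θ - a 1) * θ - b 0) = 0 := by
  obtain ⟨v, hv0, hv⟩ := hθ
  obtain ⟨x, hx⟩ := Function.ne_iff.mp hv0
  refine (mul_eq_zero.mp ?_).resolve_right hx
  have h1 := h.sphereSum_recurrence hv x 0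
  have h2 := h.sphereSum_recurrence hv x 1
  have h3 := h.sphereSum_recurrence hv x 2
  rw [h.sphereSum_eq_zero_of_diam_lt x v (i := 2 + 2) (by norm_num)] at h3
  rw [sphereSum_zero h.connected] at h1
  norm_num only [sphereSum_one hv] at h1 h2 h3
  linear_combination (b 2 * c 3 - (θ - a 3) * (θ - a 2) : ℝ) * h1 -
    (c 2 * (θ - a 3) : ℝ) * h2 - (c 2 * c 3 : ℝ) * h3

end IsDRG

namespace IsShilla

variable {V : Type*} [Fintype V] [DecidableEq V] {G : SimpleGraph V} [DecidableRel G.Adj]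
  {b c a : ℕ → ℕ} {β : ℕ}

theorem b_zero (h : IsShilla G b c a) (hβ : a 3 = a 1 + β) : b 0 = a 3 * β := by
  obtain ⟨v, hv0, hv⟩ := h.second.1
  obtain ⟨x, hx⟩ := Function.ne_iff.mp hv0
  have h1 := h.drg.sphereSum_recurrence hv x 0
  have h3 := h.drg.sphereSum_recurrence hv x 2
  rw [h.drg.sphereSum_eq_zero_of_diam_lt x v (i := 2 + 2) (by norm_num)] at h3
  have hb : (b 2 : ℝ) ≠ 0 := by exact_mod_cast (h.drg.b_pos (i := 2) (by norm_num)).ne'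
  have hs : sphereSum G x v 2 = 0 := by simpa [hb] using h3
  rw [sphereSum_zero h.drg.connected] at h1
  norm_num only [hs, sphereSum_one hv] at h1
  have hβ' : (a 3 : ℝ) = a 1 + β := mod_cast hβ
  have hreal : (b 0 : ℝ) = a 3 * β := mul_right_cancel₀ hx <| by
    linear_combination h1 + (a 3 * v x : ℝ) * hβ'
  exact_mod_cast hreal

theorem one_lt_of_eq_add (h : IsShilla G b c a) (hβ : a 3 = a 1 + β) : 1 < β := by
  have hlt : a 3 < a 3 * β := h.b_zero hβ ▸ mod_cast h.second.2.1
  by_contra! hle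
  exact hlt.not_ge (mul_le_of_le_one_right (Nat.zero_le _) hle)

theorem a_three_pos (h : IsShilla G b c a) (hβ : a 3 = a 1 + β) : 0 < a 3 := by
  have := h.one_lt_of_eq_add hβ
  lia

theorem b_one (h : IsShilla G b c a) (hβ : a 3 = a 1 + β) :
    (b 1 : ℝ) = (a 3 + 1) * (β - 1) := by
  have hsum := h.drg.c_add_a_add_b (i := 0) (by norm_num)
  rw [h.drg.c_one (by norm_num), h.b_zero hβ] at hsum
  have hsum' : (1 + a 1 + b 1 : ℝ) = a 3 * β := mod_cast hsum
  have hβ' : (a 3 : ℝ) = a 1 + β := mod_cast hβ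
  linear_combination hsum' + hβ'

theorem a_two (h : IsShilla G b c a) (hβ : a 3 = a 1 + β) :
    (a 2 : ℝ) = a 3 * β - b 2 - c 2 := by
  have hsum : (c 2 + a 2 + b 2 : ℝ) = a 3 * β :=
    mod_cast (h.drg.c_add_a_add_b (i := 1) (by norm_num)).trans (h.b_zero hβ)
  linear_combination hsum

theorem c_three (h : IsShilla G b c a) (hβ : a 3 = a 1 + β) : (c 3 : ℝ) = a 3 * (β - 1) := by
  have hsum : (c 3 + a 3 + b 3 : ℝ) = a 3 * β :=
    mod_cast (h.drg.c_add_a_add_b (i := 2) (by norm_num)).trans (h.b_zero hβ)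
  rw [h.drg.b_diam, Nat.cast_zero] at hsum
  linear_combination hsum

theorem quadratic_eq_zero (h : IsShilla G b c a) (hβ : a 3 = a 1 + β) {θ : ℝ} (hθ : IsEig G θ)
    (hlt : θ < a 3) :
    θ ^ 2 - (a 3 - β - b 2 - c 2) * θ + (β * b 2 + c 2 - a 3 * β) = 0 := by
  have hchar := h.drg.intersection_charpoly_eq_zero hθ
  have hk := h.second.2.1
  have hβ' : (a 1 : ℝ) = a 3 - β := eq_sub_of_add_eq (mod_cast hβ.symm)
  rw [h.b_zero hβ, Nat.cast_mul] at hchar hk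
  rw [hβ', h.b_one hβ, h.a_two hβ, h.c_three hβ] at hchar
  have hne : (θ - a 3 * β) * (θ - a 3) ≠ 0 := mul_ne_zero (by linarith) (by linarith)
  refine (mul_eq_zero.mp ?_).resolve_left hne
  linear_combination hchar

theorem c_two_mul_card (h : IsShilla G b c a) (hβ : a 3 = a 1 + β) :
    (c 2 : ℝ) * Fintype.card V =
      c 2 * (1 + a 3 * β) + β * (a 3 + 1) * (a 3 * (β - 1) + b 2) := by
  obtain ⟨x, -⟩ := h.drg.exists_diam
  have hβ1 : (1 : ℝ) < β := mod_cast h.one_lt_of_eq_add hβ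
  have ha : (0 : ℝ) < a 3 := mod_cast h.a_three_pos hβ
  have hk0 : (#(distSphere G x 0) : ℝ) = 1 := by
    simpa [sphereSum] using sphereSum_zero h.drg.connected x 1
  have hk1 : (#(distSphere G x 1) : ℝ) = a 3 * β := by
    have hmul : (#(distSphere G x 0) : ℝ) * b 0 = #(distSphere G x 1) * c 1 :=
      mod_cast h.drg.card_distSphere_mul_b x 0
    rw [hk0, h.b_zero hβ, h.drg.c_one (by norm_num)] at hmul
    push_cast at hmul
    linear_combination -hmul
  have hk2 : #(distSphere G x 2) * (c 2 : ℝ) = a 3 * β * ((a 3 + 1) * (β - 1)) := by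
    rw [← hk1, ← h.b_one hβ]
    exact_mod_cast (h.drg.card_distSphere_mul_b x 1).symm
  have hk3 : #(distSphere G x 3) * (c 2 : ℝ) = β * (a 3 + 1) * b 2 := by
    have hmul : #(distSphere G x 2) * (b 2 : ℝ) = #(distSphere G x 3) * c 3 :=
      mod_cast h.drg.card_distSphere_mul_b x 2
    rw [h.c_three hβ] at hmul
    refine mul_left_cancel₀ (mul_pos ha (sub_pos.mpr hβ1)).ne' ?_
    linear_combination (b 2 : ℝ) * hk2 - (c 2 : ℝ) * hmul
  rw [← h.drg.sum_card_distSphere x]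
  simp only [Finset.sum_range_succ, Finset.sum_range_zero, zero_add, Nat.cast_add, hk0, hk1]
  linear_combination hk2 + hk3

theorem sum_spectrum_mul_pow (h : IsShilla G b c a) {θ₂ θ₃ : ℝ} (h₃₂ : θ₃ < θ₂) (h₂ : θ₂ < a 3)
    (hspec : ∀ θ, IsEig G θ → θ = b 0 ∨ θ = a 3 ∨ θ = θ₂ ∨ θ = θ₃) (m : ℕ) :
    (b 0 : ℝ) ^ m + eigMult G (a 3) * (a 3 : ℝ) ^ m + eigMult G θ₂ * θ₂ ^ m +
      eigMult G θ₃ * θ₃ ^ m = (G.adjMatrix ℝ ^ m).trace := by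
  have hk := h.second.2.1
  have hs : ∀ θ, IsEig G θ → θ ∈ ({(b 0 : ℝ), (a 3 : ℝ), θ₂, θ₃} : Finset ℝ) := by simpa using hspec
  have h₂k := h₂.trans hk
  rw [← sum_eigMult_mul_pow hs,
    Finset.sum_insert (by simp [hk.ne', h₂k.ne', (h₃₂.trans h₂k).ne']),
    Finset.sum_insert (by simp [h₂.ne', (h₃₂.trans h₂).ne']), Finset.sum_pair h₃₂.ne',
    h.drg.eigMult_valency]
  ring

end IsShilla

theorem add_eq_and_mul_eq_of_quadratic_eq_zero {R : Type*} [CommRing R] [IsDomain R] {x y s p : R}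
    (hxy : x ≠ y) (hx : x ^ 2 - s * x + p = 0) (hy : y ^ 2 - s * y + p = 0) :
    x + y = s ∧ x * y = p := by
  have hs : x + y = s := mul_left_cancel₀ (sub_ne_zero.mpr hxy) (by linear_combination hx - hy)
  exact ⟨hs, by linear_combination x * hs - hx⟩

theorem shilla_identity_of_moments {a β b₂ c₂ θ₂ θ₃ m₁ m n : ℝ} (ha : 0 < a) (hβ : 0 < β)
    (hsum : θ₂ + θ₃ = a - β - b₂ - c₂) (hprod : θ₂ * θ₃ = β * b₂ + c₂ - a * β)
    (hn : c₂ * n = c₂ * (1 + a * β) + β * (a + 1) * (a * (β - 1) + b₂))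
    (hm0 : 1 + m₁ + m + m = n) (hm1 : a * β + m₁ * a + m * θ₂ + m * θ₃ = 0)
    (hm2 : (a * β) ^ 2 + m₁ * a ^ 2 + m * θ₂ ^ 2 + m * θ₃ ^ 2 = n * (a * β)) :
    (b₂ + c₂) * (b₂ + c₂ - a) * (b₂ + c₂ + (β - 1) * a) - β * b₂ ^ 2 + (2 * β - 3) * c₂ ^ 2 +
      β * (β - 1) * c₂ + (β - 1) ^ 2 * a * c₂ - β * (β - 1) * a * b₂ + (β - 3) * b₂ * c₂ = 0 := by
  have hsq : θ₂ ^ 2 + θ₃ ^ 2 = (a - β - b₂ - c₂) ^ 2 - 2 * (β * b₂ + c₂ - a * β) := by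
    rw [← hsum, ← hprod]; ring
  set σ := a - β - b₂ - c₂ with hσ
  set q := σ ^ 2 - 2 * (β * b₂ + c₂ - a * β) with hq
  have first_moment : a * β + (n - 1) * a = m * (2 * a - σ) := by
    linear_combination hm1 - a * hm0 - m * hsum
  have second_moment : (a * β) ^ 2 + (n - 1) * a ^ 2 - n * (a * β) = m * (2 * a ^ 2 - q) := by
    linear_combination hm2 - a ^ 2 * hm0 - m * hsq
  have eliminate_m : (2 * a - σ) * ((a * β) ^ 2 + (n - 1) * a ^ 2 - n * (a * β)) =
      (2 * a ^ 2 - q) * (a * β + (n - 1) * a) := by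
    rw [first_moment, second_moment]; ring
  have hne : a * β * (a + 1) ≠ 0 := by positivity
  refine (mul_eq_zero.mp ?_).resolve_left hne
  rw [hq, hσ] at eliminate_m
  linear_combination c₂ * eliminate_m +
    (a * (2 * a ^ 2 - ((a - β - b₂ - c₂) ^ 2 - 2 * (β * b₂ + c₂ - a * β))) -
      (a ^ 2 - a * β) * (2 * a - (a - β - b₂ - c₂))) * hn

theorem IsShilla.identity_of_eigMult_eq {V : Type*} [Fintype V] [DecidableEq V]
    {G : SimpleGraph V} [DecidableRel G.Adj] {b c a : ℕ → ℕ} {β : ℕ} (h : IsShilla G b c a)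
    (hβ : a 3 = a 1 + β) {θ₂ θ₃ : ℝ} (h₂ : IsEig G θ₂) (h₃ : IsEig G θ₃) (h₃₂ : θ₃ < θ₂)
    (h₂a : θ₂ < a 3) (hspec : ∀ θ, IsEig G θ → θ = b 0 ∨ θ = a 3 ∨ θ = θ₂ ∨ θ = θ₃)
    (hmult : eigMult G θ₂ = eigMult G θ₃) :
    (b 2 + c 2 : ℝ) * (b 2 + c 2 - a 3) * (b 2 + c 2 + (β - 1) * a 3) - β * b 2 ^ 2 +
      (2 * β - 3) * c 2 ^ 2 + β * (β - 1) * c 2 + (β - 1) ^ 2 * a 3 * c 2 -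
      β * (β - 1) * a 3 * b 2 + (β - 3) * b 2 * c 2 = 0 := by
  obtain ⟨hsum, hprod⟩ := add_eq_and_mul_eq_of_quadratic_eq_zero h₃₂.ne'
    (h.quadratic_eq_zero hβ h₂ h₂a) (h.quadratic_eq_zero hβ h₃ (h₃₂.trans h₂a))
  have moment := h.sum_spectrum_mul_pow h₃₂ h₂a hspec
  have hm0 := moment 0
  have hm1 := moment 1
  have hm2 := moment 2
  simp only [hmult, pow_zero, mul_one, Matrix.trace_one] at hm0
  simp only [hmult, pow_one, h.b_zero hβ, Nat.cast_mul, trace_adjMatrix] at hm1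
  rw [hmult, h.drg.trace_adjMatrix_sq, h.b_zero hβ, Nat.cast_mul] at hm2
  have hβ0 : (0 : ℝ) < β := mod_cast Nat.zero_lt_of_lt (h.one_lt_of_eq_add hβ)
  exact shilla_identity_of_moments (mod_cast h.a_three_pos hβ) hβ0 hsum hprod
    (h.c_two_mul_card hβ) hm0 hm1 hm2

theorem eq_of_shilla_identity {a β c : ℤ} (hβ : 1 < β) (ha : β ≤ a) (hc : 0 < c)
    (h : 2 * c * (2 * c - a) * (2 * c + (β - 1) * a) + β * (β - 1) * c - (β - 1) * a * c +
      2 * (β - 3) * c ^ 2 = 0) :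
    a = 2 * c ∧ 4 * c = β * (β - 1) := by
  have hcancelled : 2 * (2 * c - a) * (2 * c + (β - 1) * a) + (β - 1) * (2 * c - a) + β * (β - 1) -
      4 * c = 0 :=
    mul_left_cancel₀ hc.ne' (by linear_combination h)
  have hpos : 0 < (β - 1) * a := mul_pos (by lia) (by lia)
  rcases lt_trichotomy (2 * c - a) 0 with hneg | hzero | hgt
  · have hproduct : (2 * c - a) * (2 * c + (β - 1) * a) ≤ -1 * (2 * c + (β - 1) * a) :=
      mul_le_mul_of_nonneg_right (by lia) (by lia)
    have hlinear : (β - 1) * (2 * c - a) ≤ 0 := mul_nonpos_of_nonneg_of_nonpos (by lia) hneg.le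
    have hconst : (β - 1) * β ≤ (β - 1) * a := mul_le_mul_of_nonneg_left ha (by lia)
    lia
  · rw [hzero] at hcancelled
    exact ⟨by lia, by linear_combination -hcancelled⟩
  · have hproduct : 1 * (2 * c + (β - 1) * a) ≤ (2 * c - a) * (2 * c + (β - 1) * a) :=
      mul_le_mul_of_nonneg_right hgt (by lia)
    have hlinear : 0 ≤ (β - 1) * (2 * c - a) := mul_nonneg (by lia) hgt.le
    have hconst : 0 < β * (β - 1) := mul_pos (by lia) (by lia)
    lia

/-- For a Shilla distance-regular graph with `b(Γ) = b ≥ 2`, `m₂ = m₃` and `b₂ = c₂`,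
one has `a₃ = b(b-1)/2` (and `c₂ = b(b-1)/4`). -/
theorem stmt12 {V : Type*} [Fintype V] [DecidableEq V] (G : SimpleGraph V)
    [DecidableRel G.Adj] (b c a : ℕ → ℕ) (hG : IsShilla G b c a)
    (β : ℕ) (hβ2 : 2 ≤ β) (hβ : a 3 = a 1 + β)
    (θ2 θ3 : ℝ) (h2 : IsEig G θ2) (h3 : IsEig G θ3)
    (h32 : θ3 < θ2) (h2a : θ2 < (a 3 : ℝ))
    (hall : ∀ θ : ℝ, IsEig G θ → θ = (b 0 : ℝ) ∨ θ = (a 3 : ℝ) ∨ θ = θ2 ∨ θ = θ3)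
    (hmult : eigMult G θ2 = eigMult G θ3)
    (hb2c2 : b 2 = c 2) :
    2 * a 3 = β * (β - 1) ∧ 4 * c 2 = β * (β - 1) := by
  have hidentity := hG.identity_of_eigMult_eq hβ h2 h3 h32 h2a hall hmult
  rw [hb2c2] at hidentity
  have hidentity' : (2 * c 2 * (2 * c 2 - a 3) * (2 * c 2 + (β - 1) * a 3) + β * (β - 1) * c 2 -
      (β - 1) * a 3 * c 2 + 2 * (β - 3) * c 2 ^ 2 : ℝ) = 0 := by linear_combination hidentity
  have hc : 0 < c 2 := hG.drg.c_succ_pos (i := 1) (by norm_num)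
  obtain ⟨ha, h4c⟩ := eq_of_shilla_identity (a := a 3) (β := β) (c := c 2)
    (by lia) (by lia) (by lia) (by exact_mod_cast hidentity')
  zify [show 1 ≤ β by lia]
  exact ⟨by linear_combination 2 * ha + h4c, h4c⟩
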